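/- arXiv:math/0403181 — 2 statements merged into one kernel-verified Lean document; each statement's English description precedes it below -/
import Mathlib

section
/- Let R be a commutative noetherian ring, M an R-module, and N the R[X]-module of finitely supported sequences a : ℕ → M, where R acts componentwise and (X·a)(n) = a(n+1) for all n. If for some m ≥ 1 the socle series of the R-module M satisfies S_m(M) ≠ S_{m−1}(M), then the R[X]-module S_m(N) (the m-th socle series member of N) cannot be generated by fewer than m elements. -/
open Polynomial

/-- The shift endomorphism of the module of finitely supported sequences `ℕ → M`:
`(shift a) n = a (n + 1)`. -/
noncomputable def shiftMap (R M : Type*) [CommRing R] [AddCommGroup M] [Module R M] :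
    (ℕ →₀ M) →ₗ[R] (ℕ →₀ M) :=
  Finsupp.lcomapDomain (fun n => n + 1) (fun _ _ h => Nat.succ_injective h)

/-- The module of divided powers `M[X⁻¹]`: the finitely supported sequences `ℕ → M`
with the `R[X]`-module structure in which `R` acts componentwise and `X` acts by the
shift `(X • a) n = a (n + 1)`. -/
noncomputable abbrev DividedPowersModule (R M : Type*) [CommRing R] [AddCommGroup M]
    [Module R M] : Type _ :=
  Module.AEval' (shiftMap R M)

/-- The socle of a module: the sum of all its simple submodules. -/
def socle (R M : Type*) [Ring R] [AddCommGroup M] [Module R M] : Submodule R M :=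
  sSup {S : Submodule R M | IsSimpleModule R ↥S}

/-- The socle series of a module: `S 0 = ⊥` and `S (m+1)` is the preimage in `M` of the
socle of `M ⧸ S m`. -/
def socleSeries (R M : Type*) [Ring R] [AddCommGroup M] [Module R M] :
    ℕ → Submodule R M
  | 0 => ⊥
  | m + 1 => (socle R (M ⧸ socleSeries R M m)).comap (socleSeries R M m).mkQ

section Aux

variable {R M : Type*} [CommRing R] [AddCommGroup M] [Module R M]

theorem mem_socleSeries_succ_of {I : Ideal R} (hI : I.IsMaximal) {k : ℕ} {x : M}
    (h : ∀ r ∈ I, r • x ∈ socleSeries R M k) : x ∈ socleSeries R M (k + 1) := by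
  change (socleSeries R M k).mkQ x ∈ socle R (M ⧸ socleSeries R M k)
  by_cases hv : (socleSeries R M k).mkQ x = 0
  · rw [hv]; exact zero_mem _
  have hker : LinearMap.ker (LinearMap.toSpanSingleton R _ ((socleSeries R M k).mkQ x)) = I := by
    symm
    apply hI.eq_of_le
    · intro h1
      apply hv
      have : (1 : R) ∈ LinearMap.ker
          (LinearMap.toSpanSingleton R _ ((socleSeries R M k).mkQ x)) := by rw [h1]; trivial
      simpa using this
    · intro r hr
      rw [LinearMap.mem_ker, LinearMap.toSpanSingleton_apply, ← map_smul]
      exact (Submodule.Quotient.mk_eq_zero _).2 (h r hr)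
  have hs : IsSimpleModule R
      (LinearMap.range (LinearMap.toSpanSingleton R _ ((socleSeries R M k).mkQ x))) := by
    rw [isSimpleModule_iff_quot_maximal]
    exact ⟨_, hker ▸ hI, ⟨(LinearMap.quotKerEquivRange _).symm⟩⟩
  have := le_sSup (a := LinearMap.range _) (s := {S : Submodule R _ | IsSimpleModule R ↥S}) hs
  exact this ⟨1, by simp⟩

theorem socleSeries_le_succ (k : ℕ) : socleSeries R M k ≤ socleSeries R M (k + 1) := by
  intro x hx
  change (socleSeries R M k).mkQ x ∈ socle R (M ⧸ socleSeries R M k)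
  rw [(by simpa using hx : (socleSeries R M k).mkQ x = 0)]
  exact zero_mem _

theorem socleSeries_succ_le {k : ℕ} {B : Submodule R M} (hk : socleSeries R M k ≤ B)
    (h : ∀ (I : Ideal R) (x : M), I.IsMaximal → (∀ r ∈ I, r • x ∈ socleSeries R M k) → x ∈ B) :
    socleSeries R M (k + 1) ≤ B := by
  have h1 : socle R (M ⧸ socleSeries R M k) ≤ B.map (socleSeries R M k).mkQ := by
    apply sSup_le
    intro S hS s hs
    have hS' : IsSimpleModule R S := hS
    obtain ⟨y, rfl⟩ := Submodule.mkQ_surjective _ s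
    refine ⟨y, ?_, rfl⟩
    by_cases h0 : (⟨_, hs⟩ : S) = 0
    · apply hk
      have := congrArg Subtype.val h0
      simpa using this
    · refine h _ y (IsSimpleModule.ker_toSpanSingleton_isMaximal R h0) ?_
      intro r hr
      rw [LinearMap.mem_ker, LinearMap.toSpanSingleton_apply] at hr
      have := congrArg Subtype.val hr
      change r • (socleSeries R M k).mkQ y = 0 at this
      rw [← map_smul] at this
      exact (Submodule.Quotient.mk_eq_zero _).1 this
  intro x hx
  obtain ⟨b, hb, hbx⟩ := h1 (show (socleSeries R M k).mkQ x ∈ _ from hx)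
  have : x - b ∈ socleSeries R M k := by
    have : (socleSeries R M k).mkQ (x - b) = 0 := by rw [map_sub, hbx, sub_self]
    exact (Submodule.Quotient.mk_eq_zero _).1 this
  have := B.add_mem (hk this) hb
  simpa using this

/-- elements killed by the `k`-th power of `I` -/
def tors (M : Type*) [AddCommGroup M] [Module R M] (I : Ideal R) : ℕ → Submodule R M
  | 0 => ⊥
  | k + 1 =>
    { carrier := {x | ∀ r ∈ I, r • x ∈ tors M I k}
      add_mem' := fun {a b} ha hb r hr => by
        rw [smul_add]; exact add_mem (ha r hr) (hb r hr)
      zero_mem' := fun r _ => by rw [smul_zero]; exact zero_mem _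
      smul_mem' := fun c x hx r hr => by
        rw [smul_comm]; exact Submodule.smul_mem _ _ (hx r hr) }

theorem mem_tors_succ {I : Ideal R} {k : ℕ} {x : M} :
    x ∈ tors M I (k + 1) ↔ ∀ r ∈ I, r • x ∈ tors M I k := Iff.rfl

theorem tors_le_succ (I : Ideal R) (k : ℕ) : tors M I k ≤ tors M I (k + 1) :=
  fun _ hx _ _ => Submodule.smul_mem _ _ hx

theorem tors_le_socleSeries {I : Ideal R} (hI : I.IsMaximal) (k : ℕ) :
    tors M I k ≤ socleSeries R M k := by
  induction k with
  | zero => exact le_rfl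
  | succ k ih => exact fun x hx => mem_socleSeries_succ_of hI fun r hr => ih (hx r hr)

theorem pow_smul_tors {I : Ideal R} {r : R} (hr : r ∈ I) (k : ℕ) {x : M}
    (hx : x ∈ tors M I k) : r ^ k • x = 0 := by
  induction k generalizing x with
  | zero => simpa using (show x ∈ (⊥ : Submodule R M) from hx)
  | succ k ih => rw [pow_succ, mul_smul]; exact ih (hx r hr)

theorem exists_smul_mem_tors (p : MaximalSpectrum R) (k : ℕ) {y : M}
    (hy : y ∈ ⨆ q : MaximalSpectrum R, tors M q.asIdeal k) :
    ∃ j, j ∉ p.asIdeal ∧ j • y ∈ tors M p.asIdeal k := by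
  have hp := p.isMaximal
  induction hy using Submodule.iSup_induction' with
  | mem q x hx =>
    by_cases hq : q = p
    · subst hq
      exact ⟨1, fun h => hp.ne_top ((Ideal.eq_top_iff_one _).2 h), by simpa using hx⟩
    · have : ¬ q.asIdeal ≤ p.asIdeal := fun h =>
        hq (MaximalSpectrum.ext (q.isMaximal.eq_of_le hp.ne_top h))
      obtain ⟨j, hjq, hjp⟩ := Set.not_subset.1 this
      refine ⟨j ^ k, fun h => hjp (hp.isPrime.mem_of_pow_mem _ h), ?_⟩
      rw [pow_smul_tors hjq k hx]
      exact zero_mem _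
  | zero => exact ⟨1, fun h => hp.ne_top ((Ideal.eq_top_iff_one _).2 h), by simp⟩
  | add x y _ _ hx hy =>
    obtain ⟨j, hj, hjx⟩ := hx
    obtain ⟨j', hj', hjy⟩ := hy
    refine ⟨j * j', fun h => (hp.isPrime.mem_or_mem h).elim hj hj', ?_⟩
    rw [smul_add]
    refine add_mem ?_ ?_
    · rw [mul_comm, mul_smul]; exact Submodule.smul_mem _ _ hjx
    · rw [mul_smul]; exact Submodule.smul_mem _ _ hjy

theorem exists_smul_finset (p : MaximalSpectrum R) (k : ℕ) (x : M) (s : Finset R)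
    (hs : ∀ r ∈ s, r • x ∈ ⨆ q : MaximalSpectrum R, tors M q.asIdeal k) :
    ∃ j, j ∉ p.asIdeal ∧ ∀ r ∈ s, j • r • x ∈ tors M p.asIdeal k := by
  classical
  have hp := p.isMaximal
  induction s using Finset.induction_on with
  | empty => exact ⟨1, fun h => hp.ne_top ((Ideal.eq_top_iff_one _).2 h), by simp⟩
  | insert a s _ ih =>
    obtain ⟨j, hj, hjx⟩ := ih fun r hr => hs r (Finset.mem_insert_of_mem hr)
    obtain ⟨j', hj', hjy⟩ := exists_smul_mem_tors p k (hs a (Finset.mem_insert_self _ _))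
    refine ⟨j * j', fun h => (hp.isPrime.mem_or_mem h).elim hj hj', ?_⟩
    intro r hr
    rcases Finset.mem_insert.1 hr with rfl | hr
    · rw [mul_smul]; exact Submodule.smul_mem _ _ hjy
    · rw [mul_comm, mul_smul]; exact Submodule.smul_mem _ _ (hjx r hr)

theorem socleSeries_le_iSup_tors [IsNoetherianRing R] (k : ℕ) :
    socleSeries R M k ≤ ⨆ q : MaximalSpectrum R, tors M q.asIdeal k := by
  induction k with
  | zero => exact bot_le
  | succ k ih =>
    have hle : (⨆ q : MaximalSpectrum R, tors M q.asIdeal k) ≤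
        ⨆ q : MaximalSpectrum R, tors M q.asIdeal (k + 1) :=
      iSup_mono fun q => tors_le_succ _ _
    refine socleSeries_succ_le (ih.trans hle) ?_
    intro I x hI hx
    obtain ⟨s, hs⟩ := (isNoetherianRing_iff_ideal_fg R).1 ‹_› I
    obtain ⟨j, hj, hjx⟩ := exists_smul_finset ⟨I, hI⟩ k x s
      fun r hr => ih (hx r (hs ▸ Ideal.subset_span hr))
    have hjT : j • x ∈ tors M I (k + 1) := by
      have : I ≤ (tors M I k).comap (LinearMap.toSpanSingleton R M (j • x)) := by
        rw [← hs]
        refine Submodule.span_le.2 fun r hr => ?_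
        change r • j • x ∈ tors M (Ideal.span _) k
        rw [hs, smul_comm]
        exact hjx r hr
      exact fun r hr => this hr
    obtain ⟨c, hc⟩ := hI.exists_inv hj
    obtain ⟨i, hi, hci⟩ := hc
    have : x = c • j • x + i • x := by rw [← mul_smul, ← add_smul, hci, one_smul]
    rw [this]
    refine add_mem (Submodule.smul_mem _ _ ?_) (hle (ih (hx i hi)))
    exact (le_iSup (fun q : MaximalSpectrum R => tors M q.asIdeal (k + 1)) ⟨I, hI⟩) hjT

theorem exists_max_tors [IsNoetherianRing R] (m : ℕ)
    (hne : socleSeries R M (m + 1) ≠ socleSeries R M m) :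
    ∃ I : Ideal R, I.IsMaximal ∧ ∀ j ≤ m, ∃ x ∈ tors M I (j + 1), x ∉ socleSeries R M j := by
  by_contra! hcon
  apply hne
  refine le_antisymm ?_ (socleSeries_le_succ m)
  refine (socleSeries_le_iSup_tors _).trans (iSup_le fun q => ?_)
  obtain ⟨j, hj, hjx⟩ := hcon q.asIdeal q.isMaximal
  obtain ⟨d, rfl⟩ := Nat.exists_eq_add_of_le hj
  have key : ∀ d, tors M q.asIdeal (j + d + 1) ≤ socleSeries R M (j + d) := by
    intro d
    induction d with
    | zero => exact hjx
    | succ d ih => exact fun x hx => mem_socleSeries_succ_of q.isMaximal fun r hr => ih (hx r hr)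
  exact key d

theorem exists_functional {I : Ideal R} (hI : I.IsMaximal) (j : ℕ) {x : M}
    (hx : x ∈ tors M I (j + 1)) (hxn : x ∉ socleSeries R M j) :
    ∃ f : socleSeries R M (j + 1) →ₗ[R] R ⧸ I,
      (∀ y : socleSeries R M (j + 1), (y : M) ∈ socleSeries R M j → f y = 0) ∧
      f ⟨x, tors_le_socleSeries hI _ hx⟩ = 1 := by
  let V := M ⧸ socleSeries R M j
  have hss : IsSemisimpleModule R (socle R V) := by
    unfold socle
    rw [sSup_eq_iSup]
    apply isSemisimpleModule_biSup_of_isSemisimpleModule_submodule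
    intro S hS
    have : IsSimpleModule R S := hS
    infer_instance
  let q : socleSeries R M (j + 1) →ₗ[R] socle R V :=
    (socleSeries R M j).mkQ.restrict (fun y hy => hy)
  let x' : socleSeries R M (j + 1) := ⟨x, tors_le_socleSeries hI _ hx⟩
  have hq0 : ∀ y : socleSeries R M (j + 1), q y = 0 ↔ (y : M) ∈ socleSeries R M j := by
    intro y
    rw [← Subtype.coe_inj]
    change (socleSeries R M j).mkQ y.1 = 0 ↔ _
    simp
  have hIle : I ≤ LinearMap.ker (LinearMap.toSpanSingleton R _ (q x')) := by
    intro r hr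
    rw [LinearMap.mem_ker, LinearMap.toSpanSingleton_apply, ← map_smul, hq0]
    exact tors_le_socleSeries hI _ (hx r hr)
  have hker : I = LinearMap.ker (LinearMap.toSpanSingleton R _ (q x')) := by
    refine hI.eq_of_le ?_ hIle
    intro h
    have : (1 : R) ∈ LinearMap.ker (LinearMap.toSpanSingleton R _ (q x')) := by rw [h]; trivial
    rw [LinearMap.mem_ker, LinearMap.toSpanSingleton_apply, one_smul, hq0] at this
    exact hxn this
  let g : (R ⧸ I) →ₗ[R] socle R V := Submodule.liftQ I (LinearMap.toSpanSingleton R _ (q x')) hIle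
  have hg : Function.Injective g := by
    rw [← LinearMap.ker_eq_bot]
    exact Submodule.ker_liftQ_eq_bot _ _ _ hker.symm.le
  obtain ⟨h, hh⟩ := IsSemisimpleModule.extension_property g hg LinearMap.id
  refine ⟨h ∘ₗ q, fun y hy => ?_, ?_⟩
  · rw [LinearMap.comp_apply, (hq0 y).2 hy, map_zero]
  · have h1 : g 1 = q x' := by
      change Submodule.liftQ I _ hIle (Submodule.Quotient.mk 1) = _
      rw [Submodule.liftQ_apply, LinearMap.toSpanSingleton_apply, one_smul]
    change h (q x') = 1
    rw [← h1]
    exact LinearMap.congr_fun hh 1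

/-- coordinate -/
noncomputable def cf (n : ℕ) : DividedPowersModule R M →ₗ[R] M :=
  (Finsupp.lapply n) ∘ₗ (Module.AEval'.of (shiftMap R M)).symm.toLinearMap

theorem cf_X_smul (n : ℕ) (a : DividedPowersModule R M) :
    cf n ((X : R[X]) • a) = cf (n + 1) a := by
  unfold cf
  rw [LinearMap.comp_apply, LinearEquiv.coe_coe, Module.AEval'.of_symm_X_smul]
  rfl

theorem cf_C_smul (n : ℕ) (r : R) (a : DividedPowersModule R M) :
    cf n ((C r : R[X]) • a) = r • cf n a := by
  rw [Module.AEval.C_smul, map_smul]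

theorem cf_X_pow_smul (n k : ℕ) (a : DividedPowersModule R M) :
    cf n ((X ^ k : R[X]) • a) = cf (n + k) a := by
  induction k generalizing a with
  | zero => simp
  | succ k ih => rw [pow_succ, mul_smul, ih, cf_X_smul]; rfl

theorem cf_ext {a b : DividedPowersModule R M} (h : ∀ n, cf n a = cf n b) : a = b :=
  (Module.AEval'.of (shiftMap R M)).symm.injective (Finsupp.ext h)

theorem exists_X_pow_smul (a : DividedPowersModule R M) : ∃ K, (X ^ K : R[X]) • a = 0 := by
  classical
  let b := (Module.AEval'.of (shiftMap R M)).symm a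
  refine ⟨b.support.sup id + 1, cf_ext fun n => ?_⟩
  rw [cf_X_pow_smul, map_zero]
  change b _ = 0
  by_contra h
  have := Finset.le_sup (f := id) (Finsupp.mem_support_iff.2 h)
  simp only [id] at this
  omega

/-- sequence submodules -/
noncomputable def seqSub (B : ℕ → Submodule R M) (hB : ∀ n, B (n + 1) ≤ B n) :
    Submodule R[X] (DividedPowersModule R M) where
  carrier := {a | ∀ n, cf n a ∈ B n}
  add_mem' := fun ha hb n => by rw [map_add]; exact add_mem (ha n) (hb n)
  zero_mem' := fun n => by rw [map_zero]; exact zero_mem _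
  smul_mem' := fun p => by
    induction p using Polynomial.induction_on with
    | C r => exact fun hx n => by rw [cf_C_smul]; exact Submodule.smul_mem _ _ (hx n)
    | add p q hp hq =>
      exact fun hx n => by rw [add_smul, map_add]; exact add_mem (hp hx n) (hq hx n)
    | monomial k r ih =>
      intro x hx
      rw [pow_succ, ← mul_assoc, mul_smul]
      apply ih
      intro n
      rw [cf_X_smul]
      exact hB _ (hx _)

theorem mem_seqSub {B : ℕ → Submodule R M} {hB : ∀ n, B (n + 1) ≤ B n}
    {a : DividedPowersModule R M} : a ∈ seqSub B hB ↔ ∀ n, cf n a ∈ B n := Iff.rfl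

theorem mono_sub (B : ℕ → Submodule R M) (hB : ∀ n, B n ≤ B (n + 1)) (k n : ℕ) :
    B (k - (n + 1)) ≤ B (k - n) := monotone_nat_of_le_succ hB (by omega)

theorem cf_smul_eq (p : R[X]) (n : ℕ) (a : DividedPowersModule R M) :
    cf n (p • a) = cf (n + 1) (p.divX • a) + p.coeff 0 • cf n a := by
  conv_lhs => rw [← p.divX_mul_X_add]
  rw [add_smul, map_add, cf_C_smul, mul_comm, mul_smul, cf_X_smul]

theorem isMaximal_comap_C {J : Ideal R[X]} (hJ : J.IsMaximal) (hX : X ∈ J) :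
    (J.comap (C : R →+* R[X])).IsMaximal := by
  let f : R →+* R[X] ⧸ J := (Ideal.Quotient.mk J).comp C
  have hf : Function.Surjective f := by
    intro y
    obtain ⟨p, rfl⟩ := Ideal.Quotient.mk_surjective y
    refine ⟨p.coeff 0, ?_⟩
    conv_rhs => rw [← p.divX_mul_X_add]
    rw [map_add, map_mul, Ideal.Quotient.eq_zero_iff_mem.2 hX, mul_zero, zero_add]
    rfl
  have hb : (⊥ : Ideal (R[X] ⧸ J)).IsMaximal := Ideal.bot_quotient_isMaximal_iff J |>.2 hJ
  have := Ideal.comap_isMaximal_of_surjective f hf (K := ⊥)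
  have e : Ideal.comap f ⊥ = J.comap (C : R →+* R[X]) := by
    ext r
    simp only [Ideal.mem_comap, Ideal.mem_bot]
    exact Ideal.Quotient.eq_zero_iff_mem
  rwa [e] at this

theorem socleSeries_le_seqSub (k : ℕ) :
    socleSeries R[X] (DividedPowersModule R M) k ≤
      seqSub (fun n => socleSeries R M (k - n)) (mono_sub _ socleSeries_le_succ k) := by
  induction k with
  | zero => exact bot_le
  | succ k ih =>
    have hmono : seqSub (fun n => socleSeries R M (k - n)) (mono_sub _ socleSeries_le_succ k) ≤
        seqSub (fun n => socleSeries R M (k + 1 - n))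
          (mono_sub _ socleSeries_le_succ (k + 1)) := fun a ha n =>
      monotone_nat_of_le_succ socleSeries_le_succ (by omega : k - n ≤ k + 1 - n) (ha n)
    refine socleSeries_succ_le (ih.trans hmono) ?_
    intro J a hJ ha
    by_cases hX : X ∈ J
    · intro n
      cases n with
      | zero =>
        refine mem_socleSeries_succ_of (isMaximal_comap_C hJ hX) fun r hr => ?_
        have := ih (ha (C r) hr) 0
        rwa [cf_C_smul] at this
      | succ n =>
        have := ih (ha X hX) n
        rw [cf_X_smul] at this
        simpa using this
    · obtain ⟨K, hK⟩ := exists_X_pow_smul a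
      have hXK : (X ^ K : R[X]) ∉ J := fun h => hX (hJ.isPrime.mem_of_pow_mem _ h)
      obtain ⟨c, i, hi, hci⟩ := hJ.exists_inv hXK
      have : a = i • a := by
        conv_lhs => rw [← one_smul R[X] a, ← hci, add_smul, mul_smul, hK, smul_zero, zero_add]
      rw [this]
      exact hmono (ih (ha i hi))

theorem isMaximal_comap_coeff {I : Ideal R} (hI : I.IsMaximal) :
    (I.comap (constantCoeff : R[X] →+* R)).IsMaximal :=
  Ideal.comap_isMaximal_of_surjective _ fun r => ⟨C r, by simp⟩

theorem seqSub_tors_le {I : Ideal R} (hI : I.IsMaximal) (k : ℕ) :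
    seqSub (fun n => tors M I (k - n)) (mono_sub _ (tors_le_succ I) k) ≤
      socleSeries R[X] (DividedPowersModule R M) k := by
  induction k with
  | zero =>
    intro a ha
    have : a = 0 := cf_ext fun n => by
      have := ha n
      simp only [Nat.zero_sub] at this
      rw [map_zero]
      simpa using (show cf n a ∈ (⊥ : Submodule R M) from this)
    rw [this]; exact zero_mem _
  | succ k ih =>
    intro a ha
    refine mem_socleSeries_succ_of (isMaximal_comap_coeff hI) fun p hp => ih fun n => ?_
    rw [cf_smul_eq]
    refine add_mem ?_ ?_
    · have := Submodule.smul_mem _ p.divX ha (n + 1)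
      simpa using this
    · have h := ha n
      have hp' : p.coeff 0 ∈ I := hp
      by_cases hn : n ≤ k
      · simp only [Nat.succ_sub hn] at h
        exact h _ hp'
      · simp only [show k + 1 - n = 0 by omega] at h
        simp only [show k - n = 0 by omega]
        exact Submodule.smul_mem _ _ h

end Aux

/-- For `R` commutative noetherian, if `S_m(M) ≠ S_{m−1}(M)` for some `m ≥ 1`, then the
`R[X]`-module `S_m(N)`, `N = M[X⁻¹]`, cannot be generated by fewer than `m` elements. -/
theorem socleSeries_dividedPowers_generators (R M : Type*) [CommRing R]
    [IsNoetherianRing R] [AddCommGroup M] [Module R M] (m : ℕ) (hm : 1 ≤ m)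
    (hne : socleSeries R M m ≠ socleSeries R M (m - 1)) :
    ¬ ∃ G : Finset (DividedPowersModule R M), G.card < m ∧
        Submodule.span (Polynomial R) (G : Set (DividedPowersModule R M))
          = socleSeries (Polynomial R) (DividedPowersModule R M) m := by
  rintro ⟨G, hG, hspan⟩
  classical
  obtain ⟨m, rfl⟩ : ∃ k, m = k + 1 := ⟨m - 1, by omega⟩
  rw [Nat.add_sub_cancel] at hne
  obtain ⟨I, hI, hx⟩ := exists_max_tors m hne
  have hex : ∀ n : Fin (m + 1), ∃ j x, ∃ hj : j + 1 = m + 1 - n, x ∈ tors M I (j + 1) ∧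
      ∃ f : socleSeries R M (m + 1 - n) →ₗ[R] R ⧸ I,
      (∀ y : socleSeries R M (m + 1 - n), (y : M) ∈ socleSeries R M j → f y = 0) ∧
      ∀ h, f ⟨x, h⟩ = 1 := by
    intro n
    obtain ⟨x, hx1, hx2⟩ := hx (m - n) (by omega)
    obtain ⟨f, hf1, hf2⟩ := exists_functional hI (m - n) hx1 hx2
    have e : m - n + 1 = m + 1 - (n : ℕ) := by omega
    refine ⟨m - n, x, e, hx1, ?_⟩
    rw [← e]
    exact ⟨f, hf1, fun _ => hf2⟩
  choose j x hj hxT f hf0 hf1 using hex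
  let S := Submodule.span R[X] (G : Set (DividedPowersModule R M))
  have hS : ∀ a : S, ∀ n, cf n (a : DividedPowersModule R M) ∈ socleSeries R M (m + 1 - n) :=
    fun a n => socleSeries_le_seqSub (m + 1) (hspan ▸ a.2) n
  letI : Field (R ⧸ I) := Ideal.Quotient.field I
  let σ : R[X] →+* R ⧸ I := (Ideal.Quotient.mk I).comp constantCoeff
  haveI : RingHomSurjective σ := ⟨by
    intro y
    obtain ⟨r, rfl⟩ := Ideal.Quotient.mk_surjective y
    exact ⟨C r, by simp [σ]⟩⟩
  let Φ : S →ₛₗ[σ] (Fin (m + 1) → R ⧸ I) :=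
    { toFun := fun a n => f n ⟨cf n a.1, hS a n⟩
      map_add' := fun a b => by
        funext n
        rw [Pi.add_apply, ← map_add]
        congr 1
      map_smul' := fun p a => by
        funext n
        have h1 : (⟨cf n (p • a).1, hS (p • a) n⟩ : socleSeries R M (m + 1 - n)) =
            ⟨cf (n + 1) (p.divX • a).1, by
              have := hS (p.divX • a) (n + 1)
              exact mono_sub _ socleSeries_le_succ _ _ this⟩ +
            p.coeff 0 • ⟨cf n a.1, hS a n⟩ := by
          apply Subtype.ext
          exact cf_smul_eq p n a.1
        rw [h1, map_add, map_smul, hf0 n _ ?_, zero_add]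
        · rw [Pi.smul_apply, smul_eq_mul, Algebra.smul_def]
          rfl
        · have := hS (p.divX • a) (n + 1)
          rwa [show m + 1 - ((n : ℕ) + 1) = j n by have := hj n; omega] at this }
  have hsurj : LinearMap.range Φ = ⊤ := by
    rw [eq_top_iff, ← (Pi.basisFun (R ⧸ I) (Fin (m + 1))).span_eq, Submodule.span_le]
    rintro _ ⟨n, rfl⟩
    let a : DividedPowersModule R M := Module.AEval'.of (shiftMap R M) (Finsupp.single (n : ℕ) (x n))
    have hcf : ∀ i, cf i a = if (n : ℕ) = i then x n else 0 := fun i => Finsupp.single_apply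
    have ha : a ∈ S := by
      change a ∈ Submodule.span _ _
      rw [hspan]
      apply seqSub_tors_le hI
      intro i
      rw [hcf]
      split_ifs with h
      · subst h; have := hxT n; rwa [hj n] at this
      · exact zero_mem _
    refine ⟨⟨a, ha⟩, ?_⟩
    funext i
    change f i ⟨cf i a, _⟩ = _
    rw [Pi.basisFun_apply]
    by_cases h : i = n
    · subst h
      rw [Pi.single_eq_same]
      simp only [hcf, if_true]
      exact hf1 i _
    · rw [Pi.single_eq_of_ne h]
      apply hf0
      change cf i a ∈ _
      rw [hcf, if_neg (fun h' => h (Fin.ext h'.symm))]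
      exact zero_mem _
  have htop : Submodule.span R[X] (((↑) : S → DividedPowersModule R M) ⁻¹' G) = ⊤ :=
    Submodule.span_span_coe_preimage
  let G' : Finset S := G.preimage (fun a : S => (a : DividedPowersModule R M))
    Subtype.val_injective.injOn
  have hG' : G'.card ≤ G.card := Finset.card_le_card_of_injOn (fun a => a.1)
    (fun a ha => by simpa [G'] using ha) Subtype.val_injective.injOn
  have h2 : Submodule.span (R ⧸ I) ((G'.image Φ : Finset _) : Set (Fin (m + 1) → R ⧸ I)) = ⊤ := by
    rw [← hsurj, LinearMap.range_eq_map, ← htop, Submodule.map_span]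
    simp [G']
  have h3 := finrank_span_finset_le_card (R := R ⧸ I) (G'.image Φ)
  rw [Set.finrank, h2, finrank_top, Module.finrank_fin_fun] at h3
  have h4 : (G'.image Φ).card ≤ G'.card := Finset.card_image_le
  omega
end

section
/- Let p be an odd prime, and let R₂ = ℤ[x, x⁻¹, (1−x)⁻¹] be the localization of the polynomial ring ℤ[x] at the multiplicative set generated by x and 1−x. Let P'_{1,1} = R₂/(pR₂ + (1+x)R₂), and let P'_{3,1} be the R₂-module with underlying abelian group ℤ/p³ℤ × ℤ/p²ℤ × ℤ/pℤ on which x acts by x·(a₀,a₁,a₂) = (p·a₁ − a₀, p·a₂ − a₁, −a₂) (where p·a₁ and p·a₂ denote the images of a₁ and a₂ under the additive homomorphisms ℤ/p²ℤ → ℤ/p³ℤ and ℤ/pℤ → ℤ/p²ℤ induced by multiplication by p on ℤ; since p is odd, x and 1−x act invertibly, so this ℤ[x]-action extends uniquely to an R₂-module structure). If Q is a cocyclic R₂-module with socle isomorphic to P'_{1,1} and |Q| = p⁶, then Q can be generated by at most three elements, and if Q cannot be generated by two elements then Q is isomorphic to P'_{3,1}. -/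
open Polynomial

/-- The ring `R₂ = ℤ[x, x⁻¹, (1−x)⁻¹]`: the localization of `ℤ[x]` at the multiplicative
set generated by `x` and `1 − x`. -/
abbrev R₂ : Type :=
  Localization (Submonoid.closure {Polynomial.X, 1 - Polynomial.X} : Submonoid (Polynomial ℤ))

/-- The image of `x` in `R₂`. -/
noncomputable def xR : R₂ := algebraMap (Polynomial ℤ) R₂ Polynomial.X

theorem aux_W {R : Type*} [CommRing R] (a y : R) : ∃ W : Subring R, ∀ r : R, r ∈ W ↔
    ∃ (n : ℤ) (u v : R), r = n + a * u + y * v := by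
  let m : Ideal R := Ideal.span {a, y}
  refine ⟨(Int.castRingHom (R ⧸ m)).range.comap (Ideal.Quotient.mk m), fun r => ?_⟩
  constructor
  · rintro ⟨n, hn⟩
    change (n : R ⧸ m) = Ideal.Quotient.mk m r at hn
    rw [← map_intCast (Ideal.Quotient.mk m), eq_comm, Ideal.Quotient.eq, Ideal.mem_span_pair] at hn
    obtain ⟨u, v, h⟩ := hn
    exact ⟨n, u, v, by linear_combination -h⟩
  · rintro ⟨n, u, v, h⟩
    refine ⟨n, ?_⟩
    rw [eq_comm]
    change Ideal.Quotient.mk m r = (n : R ⧸ m)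
    rw [← map_intCast (Ideal.Quotient.mk m), Ideal.Quotient.eq, Ideal.mem_span_pair]
    exact ⟨u, v, by rw [h]; ring⟩

theorem aux_Z (p : ℕ) (hp : p.Prime) (hodd : p ≠ 2) (r : R₂) :
    ∃ (n : ℤ) (u v : R₂), r = n + (p : R₂) * u + (1 + xR) * v := by
  obtain ⟨W, hW'⟩ := aux_W (p : R₂) (1 + xR)
  have hW : ∀ (r : R₂) (n : ℤ) (u v : R₂), r = n + (p : R₂) * u + (1 + xR) * v → r ∈ W :=
    fun r n u v h => (hW' r).2 ⟨n, u, v, h⟩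
  have hx : xR ∈ W := hW _ (-1) 0 1 (by push_cast; ring)
  have hpoly : ∀ a : ℤ[X], algebraMap ℤ[X] R₂ a ∈ W := by
    intro a
    induction a using Polynomial.induction_on' with
    | add a b ha hb => rw [map_add]; exact W.add_mem ha hb
    | monomial n c =>
      rw [← Polynomial.C_mul_X_pow_eq_monomial, map_mul, map_pow]
      refine W.mul_mem ?_ (W.pow_mem hx n)
      have : (Polynomial.C c : ℤ[X]) = (c : ℤ[X]) := by simp
      rw [this, map_intCast]
      exact intCast_mem W c
  have hinv : ∀ a ∈ (Submonoid.closure {Polynomial.X, 1 - Polynomial.X} : Submonoid (Polynomial ℤ)),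
      ∃ w ∈ W, algebraMap ℤ[X] R₂ a * w = 1 := by
    intro a ha
    induction ha using Submonoid.closure_induction with
    | one => exact ⟨1, W.one_mem, by simp⟩
    | mul a b _ _ ha hb =>
      obtain ⟨w, hw, h1⟩ := ha
      obtain ⟨w', hw', h2⟩ := hb
      refine ⟨w * w', W.mul_mem hw hw', ?_⟩
      rw [map_mul]
      linear_combination (algebraMap ℤ[X] R₂ b * w') * h1 + h2
    | mem a ha =>
      have hu : IsUnit (algebraMap ℤ[X] R₂ a) := IsLocalization.map_units R₂
        (⟨a, Submonoid.subset_closure ha⟩ : (Submonoid.closure {Polynomial.X, 1 - Polynomial.X} : Submonoid (Polynomial ℤ)))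
      obtain ⟨w, hw⟩ := hu.exists_right_inv
      refine ⟨w, ?_, hw⟩
      rcases ha with rfl | ha
      · refine hW w (-1) 0 w ?_
        change xR * w = 1 at hw
        push_cast
        linear_combination -hw
      · rw [Set.mem_singleton_iff] at ha
        subst ha
        rw [map_sub, map_one] at hw
        change (1 - xR) * w = 1 at hw
        obtain ⟨k, hk⟩ := hp.odd_of_ne_two hodd
        refine hW w (k + 1) (-w) ((k + 1) * w) ?_
        have : (p : R₂) = 2 * k + 1 := by rw [hk]; push_cast; ring
        rw [this]
        push_cast
        linear_combination ((k : R₂) + 1) * hw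
  have hr : r ∈ W := by
    obtain ⟨⟨a, t⟩, h⟩ := IsLocalization.surj (Submonoid.closure {Polynomial.X, 1 - Polynomial.X} : Submonoid (Polynomial ℤ)) r
    obtain ⟨w, hw, h1⟩ := hinv t t.2
    have : r = algebraMap ℤ[X] R₂ a * w := by
      rw [← h, mul_assoc, h1, mul_one]
    rw [this]
    exact W.mul_mem (hpoly a) hw
  exact (hW' r).1 hr

section gen
variable {R : Type*} [CommRing R] {Q : Type*} [AddCommGroup Q] [Module R Q]

theorem aux_soc (p : ℕ) (hp : p.Prime) (y : R)
    (hZ : ∀ r : R, ∃ (n : ℤ) (u v : R), r = n + (p : R) * u + y * v) (s : Q) (hs : s ≠ 0)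
    (hmin : ∀ q : Q, q ≠ 0 → ∃ r : R, r • q = s) (q : Q)
    (h1 : (p : R) • q = 0) (h2 : y • q = 0) : ∃ n : ℤ, q = n • s := by
  by_cases hq : q = 0
  · exact ⟨0, by simp [hq]⟩
  obtain ⟨r, hr⟩ := hmin q hq
  obtain ⟨n, u, v, rfl⟩ := hZ r
  have h3 : n • q = s := by
    rw [← hr, add_smul, add_smul, mul_comm (p : R), mul_comm y, mul_smul, mul_smul, h1, h2,
      Int.cast_smul_eq_zsmul]
    simp
  have h1' : (p : ℤ) • q = 0 := by
    rw [← h1, ← Int.cast_smul_eq_zsmul R]; simp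
  have hn : ¬ (p : ℤ) ∣ n := by
    rintro ⟨k, rfl⟩
    apply hs
    rw [← h3, mul_comm, mul_smul, h1', smul_zero]
  have hc : IsCoprime (p : ℤ) n := (Nat.prime_iff_prime_int.mp hp).coprime_iff_not_dvd.2 hn
  obtain ⟨a, b, hab⟩ := hc
  refine ⟨b, ?_⟩
  rw [← h3, ← mul_smul]
  calc q = (a * p + b * n) • q := by rw [hab, one_smul]
    _ = _ := by rw [add_smul, mul_smul a, h1', smul_zero, zero_add]

theorem aux_mem (p : ℕ) (y : R)
    (hZ : ∀ r : R, ∃ (n : ℤ) (u v : R), r = n + (p : R) * u + y * v) (s : Q)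
    (hps : (p : R) • s = 0) (hys : y • s = 0) (q : Q) :
    q ∈ Submodule.span R {s} ↔ q ∈ AddSubgroup.zmultiples s := by
  rw [Submodule.mem_span_singleton, AddSubgroup.mem_zmultiples_iff]
  constructor
  · rintro ⟨r, rfl⟩
    obtain ⟨n, u, v, rfl⟩ := hZ r
    refine ⟨n, ?_⟩
    rw [add_smul, add_smul, mul_comm (p : R), mul_comm y, mul_smul, mul_smul, hps, hys,
      Int.cast_smul_eq_zsmul]
    simp
  · rintro ⟨n, rfl⟩
    exact ⟨n, Int.cast_smul_eq_zsmul _ _ _⟩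

theorem aux_card (p : ℕ) (hp : p.Prime) (y : R)
    (hZ : ∀ r : R, ∃ (n : ℤ) (u v : R), r = n + (p : R) * u + y * v) (s : Q) (hs : s ≠ 0)
    (hps : (p : R) • s = 0) (hys : y • s = 0) : Nat.card (Submodule.span R {s}) = p := by
  have : Nat.card (Submodule.span R {s}) = Nat.card (AddSubgroup.zmultiples s) :=
    Nat.card_congr (Equiv.subtypeEquivRight (aux_mem p y hZ s hps hys))
  rw [this, Nat.card_zmultiples]
  have := Fact.mk hp
  refine addOrderOf_eq_prime ?_ hs
  rw [← hps, Nat.cast_smul_eq_nsmul]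

theorem aux_nilp [Finite Q] (s : Q) (hs : s ≠ 0)
    (hmin : ∀ q : Q, q ≠ 0 → ∃ r : R, r • q = s) (z : R) (hz : z • s = 0) :
    ∃ n : ℕ, ∀ q : Q, z ^ n • q = 0 := by
  let f : Module.End R Q := LinearMap.lsmul R Q z
  have hf : ∀ n (q : Q), (f ^ n) q = z ^ n • q := by
    intro n q
    have : f ^ n = LinearMap.lsmul R Q (z ^ n) := by
      change (Module.toModuleEnd R (S := R) Q z) ^ n = Module.toModuleEnd R (S := R) Q (z ^ n)
      rw [map_pow]
    rw [this]; rfl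
  obtain ⟨n, hn⟩ := Filter.eventually_atTop.1 (f.eventually_disjoint_ker_pow_range_pow)
  have hd := hn (n + 1) (by omega)
  refine ⟨n + 1, fun q => ?_⟩
  by_contra hq
  obtain ⟨r, hr⟩ := hmin _ hq
  apply hs
  refine (Submodule.disjoint_def.1 hd) s ?_ ?_
  · rw [LinearMap.mem_ker, hf, pow_succ, mul_smul, hz, smul_zero]
  · exact ⟨r • q, by rw [hf, ← hr, smul_comm]⟩

theorem aux_cardker {M N : Type*} [AddCommGroup M] [AddCommGroup N] [Module R M] [Module R N]
    (f : M →ₗ[R] N) : Nat.card M = Nat.card (LinearMap.ker f) * Nat.card (LinearMap.range f) := by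
  rw [Submodule.card_eq_card_quotient_mul_card (LinearMap.ker f),
    Nat.card_congr f.quotKerEquivRange.toEquiv, mul_comm]

theorem aux_step (p k : ℕ) (hp : p.Prime) (hcard : Nat.card Q = p ^ k) [Finite Q]
    (N : Submodule R Q) : ∃ q, N ⊔ Submodule.span R {q} = ⊤ ∨
      p * Nat.card N ≤ Nat.card ↥(N ⊔ Submodule.span R {q}) := by
  by_cases hN : N = ⊤
  · exact ⟨0, Or.inl (by simp [hN])⟩
  obtain ⟨q, hq⟩ : ∃ q, q ∉ N := by
    by_contra! h
    exact hN (eq_top_iff.2 fun q _ => h q)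
  refine ⟨q, Or.inr ?_⟩
  set N' := N ⊔ Submodule.span R {q}
  have hle : N ≤ N' := le_sup_left
  have hqN : q ∈ N' := Submodule.mem_sup_right (Submodule.mem_span_singleton_self q)
  have hd : ∀ T : Submodule R Q, Nat.card T ∣ p ^ k := fun T => by
    rw [← hcard, Submodule.card_eq_card_quotient_mul_card T]; exact Dvd.intro _ rfl
  obtain ⟨i, hi, h1⟩ := (Nat.dvd_prime_pow hp).1 (hd N)
  obtain ⟨j, hj, h2⟩ := (Nat.dvd_prime_pow hp).1 (hd N')
  have hlt : Nat.card N < Nat.card N' := by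
    rw [← SetLike.coe_sort_coe, ← SetLike.coe_sort_coe, Nat.card_coe_set_eq, Nat.card_coe_set_eq]
    refine Set.ncard_lt_ncard ?_ (Set.toFinite _)
    exact ⟨hle, fun h => hq (h hqN)⟩
  rw [h1, h2] at hlt ⊢
  have := (Nat.pow_lt_pow_iff_right hp.one_lt).1 hlt
  rw [← pow_succ']
  exact Nat.pow_le_pow_right hp.pos this

theorem aux_two (p : ℕ) (hp : p.Prime) (hcard : Nat.card Q = p ^ 6) [Finite Q]
    (z : R) (n : ℕ) (hz : ∀ q : Q, z ^ n • q = 0)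
    (hk : Nat.card (LinearMap.ker (LinearMap.lsmul R Q z)) ≤ p ^ 2) :
    ∃ G : Finset Q, G.card ≤ 2 ∧ Submodule.span R (G : Set Q) = ⊤ := by
  classical
  let N := LinearMap.range (LinearMap.lsmul R Q z)
  have h0 : p ^ 4 ≤ Nat.card N := by
    have h := aux_cardker (LinearMap.lsmul R Q z)
    rw [hcard] at h
    by_contra! hlt
    have hp2 : 0 < p ^ 2 := pow_pos hp.pos 2
    have : p ^ 6 < p ^ 2 * p ^ 4 := by
      rw [h]
      calc _ ≤ p ^ 2 * Nat.card N := Nat.mul_le_mul_right _ hk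
        _ < _ := Nat.mul_lt_mul_of_pos_left hlt hp2
    rw [← pow_add] at this
    exact lt_irrefl _ this
  have htop : ∀ T : Submodule R Q, p ^ 6 ≤ Nat.card T → T = ⊤ := by
    intro T hT
    have : (T : Set Q) = Set.univ := by
      apply Set.eq_of_subset_of_ncard_le (Set.subset_univ _) _ (Set.toFinite _)
      rw [Set.ncard_univ, hcard]
      exact hT
    exact SetLike.coe_injective (by simpa using this)
  obtain ⟨q1, h1⟩ := aux_step p 6 hp hcard N
  obtain ⟨q2, h2⟩ := aux_step p 6 hp hcard (N ⊔ Submodule.span R {q1})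
  have h3 : N ⊔ Submodule.span R {q1} ⊔ Submodule.span R {q2} = ⊤ := by
    rcases h1 with h1 | h1
    · rw [h1]; simp
    rcases h2 with h2 | h2
    · exact h2
    · apply htop
      calc p ^ 6 = p * (p * p ^ 4) := by ring
        _ ≤ p * (p * Nat.card N) := by gcongr
        _ ≤ _ := le_trans (by gcongr) h2
  refine ⟨{q1, q2}, Finset.card_le_two, ?_⟩
  have hs : Submodule.span R ((({q1, q2} : Finset Q) : Set Q)) =
      Submodule.span R {q1} ⊔ Submodule.span R {q2} := by
    rw [← Submodule.span_union]; congr 1; ext; simp [or_comm]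
  rw [hs]
  set T := Submodule.span R {q1} ⊔ Submodule.span R {q2}
  rw [sup_assoc] at h3
  change N ⊔ T = ⊤ at h3
  have key : ∀ k (q : Q), ∃ q', q - z ^ k • q' ∈ T := by
    intro k
    induction k with
    | zero => intro q; exact ⟨q, by simp⟩
    | succ k ih =>
      intro q
      obtain ⟨q', hq'⟩ := ih q
      have : q' ∈ N ⊔ T := by rw [h3]; trivial
      obtain ⟨a, ⟨b, rfl⟩, t, ht, rfl⟩ := Submodule.mem_sup.1 this
      refine ⟨b, ?_⟩
      have := T.add_mem hq' (T.smul_mem (z ^ k) ht)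
      convert this using 1
      rw [LinearMap.lsmul_apply, smul_add, pow_succ, mul_smul]
      abel
  rw [eq_top_iff]
  intro q _
  obtain ⟨q', h⟩ := key n q
  simpa [hz] using h

theorem aux_wz (p : ℕ) [Finite Q] (s : Q)
    (hmin : ∀ q : Q, q ≠ 0 → ∃ r : R, r • q = s) (z w : R)
    (hsoc : ∀ q : Q, z • q = 0 → w • q = 0 → q ∈ Submodule.span R {s})
    (hc : Nat.card (Submodule.span R {s}) = p)
    (hk : p ^ 2 < Nat.card (LinearMap.ker (LinearMap.lsmul R Q z))) :
    ∃ a : Q, z • a = 0 ∧ (w * w) • a = s := by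
  set K := LinearMap.ker (LinearMap.lsmul R Q z)
  by_cases h : ∃ a ∈ K, (w * w) • a ≠ 0
  · obtain ⟨a, ha, h⟩ := h
    obtain ⟨r, hr⟩ := hmin _ h
    have ha : z • a = 0 := ha
    exact ⟨r • a, by rw [smul_comm, ha, smul_zero], by rw [smul_comm, hr]⟩
  · exfalso
    push Not at h
    let f : K →ₗ[R] Q := (LinearMap.lsmul R Q w).comp K.subtype
    have h1 := aux_cardker f
    have h2 : Nat.card (LinearMap.range f) ≤ p := by
      rw [← hc]
      have : LinearMap.range f ≤ Submodule.span R {s} := by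
        rintro _ ⟨⟨a, ha⟩, rfl⟩
        have ha' : z • a = 0 := ha
        apply hsoc
        · change z • (w • a) = 0
          rw [smul_comm, ha', smul_zero]
        · change w • (w • a) = 0
          rw [← mul_smul]; exact h a ha
      exact Nat.card_le_card_of_injective _ (Submodule.inclusion_injective this)
    have h3 : Nat.card (LinearMap.ker f) ≤ p := by
      rw [← hc]
      refine Nat.card_le_card_of_injective
        (fun x : LinearMap.ker f => (⟨x.1.1, hsoc _ x.1.2 x.2⟩ : Submodule.span R {s})) ?_
      intro x x' hxx
      exact Subtype.ext (Subtype.ext (congrArg (fun t => t.1) hxx))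
    have := Nat.mul_le_mul h3 h2
    rw [← h1] at this
    rw [pow_two] at hk
    omega

theorem aux_comap {M N : Type*} [AddCommGroup M] [AddCommGroup N] [Module R M] [Module R N]
    (f : M →ₗ[R] N) (U : Submodule R N) (hU : U ≤ LinearMap.range f) :
    Nat.card (U.comap f) = Nat.card (LinearMap.ker f) * Nat.card U := by
  let g : U.comap f →ₗ[R] N := f.comp (U.comap f).subtype
  rw [aux_cardker g]
  congr 1
  · refine Nat.card_congr ⟨fun x => ⟨x.1.1, x.2⟩,
      fun x => ⟨⟨x.1, ?_⟩, x.2⟩, fun _ => rfl, fun _ => rfl⟩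
    rw [Submodule.mem_comap, x.2]; exact U.zero_mem
  · have : LinearMap.range g = U := by
      ext u; constructor
      · rintro ⟨x, rfl⟩; exact x.2
      · intro hu
        obtain ⟨x, rfl⟩ := hU hu
        exact ⟨⟨x, hu⟩, rfl⟩
    rw [this]

end gen

section gen2
variable {R : Type*} [CommRing R] {Q : Type*} [AddCommGroup Q] [Module R Q]

theorem aux_Q3 (p : ℕ) (P y : R) (s : Q) (hPs : P • s = 0) (hys : y • s = 0)
    (hsoc : ∀ q : Q, P • q = 0 → y • q = 0 → q ∈ Submodule.span R {s})
    (hc : Nat.card (Submodule.span R {s}) = p)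
    (hcard : Nat.card Q = p ^ 6) [Finite Q]
    (a b c : Q) (ha : y • a = 0) (ha' : (P * P) • a = s)
    (hb : P • b = 0) (hb' : (y * y) • b = s)
    (hcc : (P + y) • c = 0) (hc' : (P * P) • c = s) :
    (∀ q : Q, (P * P) • q ∈ Submodule.span R {s} ∧ (P * y) • q ∈ Submodule.span R {s} ∧
      (y * y) • q ∈ Submodule.span R {s}) ∧
    Submodule.span R {a, b, c} = ⊤ := by
  set S := Submodule.span R {s} with hS
  have hSP : ∀ q ∈ S, P • q = 0 := by
    intro q hq
    obtain ⟨r, rfl⟩ := Submodule.mem_span_singleton.1 hq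
    rw [smul_comm, hPs, smul_zero]
  have hSy : ∀ q ∈ S, y • q = 0 := by
    intro q hq
    obtain ⟨r, rfl⟩ := Submodule.mem_span_singleton.1 hq
    rw [smul_comm, hys, smul_zero]
  have ha1 : (P * y) • a = 0 := by rw [mul_smul, ha, smul_zero]
  have ha2 : (y * y) • a = 0 := by rw [mul_smul, ha, smul_zero]
  have hb1 : (P * y) • b = 0 := by rw [mul_comm, mul_smul, hb, smul_zero]
  have hb2 : (P * P) • b = 0 := by rw [mul_smul, hb, smul_zero]
  have hc1 : (P * y) • c = -s := by
    have : P • ((P + y) • c) = 0 := by rw [hcc, smul_zero]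
    rw [← mul_smul, mul_add, add_smul, hc'] at this
    exact (neg_eq_of_add_eq_zero_right this).symm
  have hc2 : (y * y) • c = s := by
    have : y • ((P + y) • c) = 0 := by rw [hcc, smul_zero]
    rw [← mul_smul, mul_add, add_smul, mul_comm y P, hc1] at this
    exact (eq_of_sub_eq_zero (by rw [← this]; abel))
  let f2 : Q →ₗ[R] Q × Q := (LinearMap.lsmul R Q P).prod (LinearMap.lsmul R Q y)
  let f3 : Q →ₗ[R] Q × Q × Q := (LinearMap.lsmul R Q (P * P)).prod
    ((LinearMap.lsmul R Q (P * y)).prod (LinearMap.lsmul R Q (y * y)))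
  have hk2 : LinearMap.ker f2 = S := by
    ext q
    rw [LinearMap.mem_ker]
    constructor
    · intro h
      exact hsoc q (congrArg Prod.fst h) (congrArg Prod.snd h)
    · intro h
      exact Prod.ext (hSP q h) (hSy q h)
  have hk3 : LinearMap.ker f3 = (S.prod S).comap f2 := by
    ext q
    rw [LinearMap.mem_ker, Submodule.mem_comap, Submodule.mem_prod]
    change ((P * P) • q, (P * y) • q, (y * y) • q) = (0, 0, 0) ↔ P • q ∈ S ∧ y • q ∈ S
    simp only [Prod.mk.injEq]
    constructor
    · rintro ⟨h1, h2, h3⟩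
      refine ⟨hsoc _ ?_ ?_, hsoc _ ?_ ?_⟩
      · rw [← mul_smul, h1]
      · rw [← mul_smul, mul_comm, h2]
      · rw [← mul_smul, h2]
      · rw [← mul_smul, h3]
    · rintro ⟨h1, h2⟩
      refine ⟨?_, ?_, ?_⟩
      · rw [mul_smul, hSP _ h1]
      · rw [mul_smul, hSP _ h2]
      · rw [mul_smul, hSy _ h2]
  have hr2 : S.prod S ≤ LinearMap.range f2 := by
    rintro ⟨u, v⟩ ⟨hu, hv⟩
    obtain ⟨i, rfl⟩ := Submodule.mem_span_singleton.1 hu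
    obtain ⟨j, rfl⟩ := Submodule.mem_span_singleton.1 hv
    refine ⟨i • P • a + j • y • b, ?_⟩
    change (P • (i • P • a + j • y • b), y • (i • P • a + j • y • b)) = (i • s, j • s)
    congr 1
    · rw [smul_add, smul_comm P i, smul_comm P j, ← mul_smul P P, ha', ← mul_smul P y, hb1]; simp
    · rw [smul_add, smul_comm y i, smul_comm y j, ← mul_smul y P, mul_comm y P, ha1,
        ← mul_smul y y, hb']; simp
  have hsol : ∀ i j k : R, f3 ((i + j) • a + (k + j) • b - j • c) = (i • s, j • s, k • s) := by
    intro i j k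
    rw [map_sub, map_add, map_smul, map_smul, map_smul]
    have e1 : f3 a = (s, 0, 0) := Prod.ext ha' (Prod.ext ha1 ha2)
    have e2 : f3 b = (0, 0, s) := Prod.ext hb2 (Prod.ext hb1 hb')
    have e3 : f3 c = (s, -s, s) := Prod.ext hc' (Prod.ext hc1 hc2)
    rw [e1, e2, e3]
    simp only [Prod.smul_mk, smul_zero, Prod.mk_add_mk, Prod.mk_sub_mk, add_zero, zero_add,
      Prod.mk.injEq, add_smul, smul_neg]
    refine ⟨by abel, by abel, by abel⟩
  have hr3 : S.prod (S.prod S) ≤ LinearMap.range f3 := by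
    rintro ⟨u, v, w⟩ ⟨hu, hv, hw⟩
    obtain ⟨i, rfl⟩ := Submodule.mem_span_singleton.1 hu
    obtain ⟨j, rfl⟩ := Submodule.mem_span_singleton.1 hv
    obtain ⟨k, rfl⟩ := Submodule.mem_span_singleton.1 hw
    exact ⟨_, hsol i j k⟩
  have hcp : ∀ {M N : Type _} [AddCommGroup M] [AddCommGroup N] [Module R M] [Module R N]
      (A : Submodule R M) (B : Submodule R N),
      Nat.card (A.prod B) = Nat.card A * Nat.card B := by
    intro M N _ _ _ _ A B
    rw [← Nat.card_prod]
    exact Nat.card_congr ⟨fun x => (⟨x.1.1, x.2.1⟩, ⟨x.1.2, x.2.2⟩),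
      fun x => ⟨(x.1.1, x.2.1), x.1.2, x.2.2⟩, fun _ => rfl, fun _ => rfl⟩
  have hcc3 : Nat.card ((S.prod (S.prod S)).comap f3) = p ^ 6 := by
    rw [aux_comap f3 _ hr3, hk3, aux_comap f2 _ hr2, hk2, hcp S (S.prod S), hcp S S, hc]
    ring
  have htop : (S.prod (S.prod S)).comap f3 = ⊤ := by
    have : (((S.prod (S.prod S)).comap f3 : Submodule R Q) : Set Q) = Set.univ := by
      apply Set.eq_of_subset_of_ncard_le (Set.subset_univ _) _ (Set.toFinite _)
      rw [Set.ncard_univ, hcard, ← hcc3]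
      exact le_rfl
    exact SetLike.coe_injective (by simpa using this)
  have h3 : ∀ q, f3 q ∈ S.prod (S.prod S) := fun q => by
    have : q ∈ (S.prod (S.prod S)).comap f3 := by rw [htop]; trivial
    exact this
  refine ⟨fun q => h3 q, ?_⟩
  rw [eq_top_iff]
  intro q _
  set T := Submodule.span R {a, b, c}
  have haT : a ∈ T := Submodule.subset_span (by simp)
  have hbT : b ∈ T := Submodule.subset_span (by simp)
  have hcT : c ∈ T := Submodule.subset_span (by simp)
  have hST : S ≤ T := by
    rw [hS, Submodule.span_le, Set.singleton_subset_iff, ← ha']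
    exact T.smul_mem _ haT
  have h2T : (S.prod S).comap f2 ≤ T := by
    intro q hq
    obtain ⟨hu, hv⟩ := hq
    obtain ⟨i, hi⟩ := Submodule.mem_span_singleton.1 hu
    obtain ⟨j, hj⟩ := Submodule.mem_span_singleton.1 hv
    change i • s = P • q at hi
    change j • s = y • q at hj
    have : q - (i • P • a + j • y • b) ∈ S := by
      apply hsoc
      · rw [smul_sub, ← hi, smul_add, smul_comm P i, smul_comm P j, ← mul_smul P P, ha',
          ← mul_smul P y, hb1]; simp
      · rw [smul_sub, ← hj, smul_add, smul_comm y i, smul_comm y j, ← mul_smul y P, mul_comm y P,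
          ha1, ← mul_smul y y, hb']; simp
    have h := T.add_mem (hST this) (T.add_mem (T.smul_mem i (T.smul_mem P haT))
      (T.smul_mem j (T.smul_mem y hbT)))
    simpa using h
  obtain ⟨hu, hv, hw⟩ := h3 q
  obtain ⟨i, hi⟩ := Submodule.mem_span_singleton.1 hu
  obtain ⟨j, hj⟩ := Submodule.mem_span_singleton.1 hv
  obtain ⟨k, hk⟩ := Submodule.mem_span_singleton.1 hw
  have : q - ((i + j) • a + (k + j) • b - j • c) ∈ LinearMap.ker f3 := by
    rw [LinearMap.mem_ker, map_sub, hsol, hi, hj, hk, sub_self]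
  rw [hk3] at this
  have h := T.add_mem (h2T this) (T.sub_mem (T.add_mem (T.smul_mem (i + j) haT)
      (T.smul_mem (k + j) hbT)) (T.smul_mem j hcT))
  simpa using h

theorem aux_main (p : ℕ) (hp : p.Prime) (y : R)
    (hZ : ∀ r : R, ∃ (n : ℤ) (u v : R), r = n + (p : R) * u + y * v) (s : Q) (hs : s ≠ 0)
    (hps : (p : R) • s = 0) (hys : y • s = 0)
    (hmin : ∀ q : Q, q ≠ 0 → ∃ r : R, r • q = s) (hcard : Nat.card Q = p ^ 6)
    (hno : ¬ ∃ G : Finset Q, G.card ≤ 2 ∧ Submodule.span R (G : Set Q) = ⊤) :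
    (∀ q : Q, (p : R) • ((p : R) * p) • q = 0 ∧ y • ((p : R) * p) • q = 0 ∧
      y • ((p : R) * y) • q = 0 ∧ y • (y * y) • q = 0) ∧
    ∃ G : Finset Q, G.card ≤ 3 ∧ Submodule.span R (G : Set Q) = ⊤ := by
  classical
  have hfin : Finite Q := Nat.finite_of_card_ne_zero (by rw [hcard]; exact pow_ne_zero _ hp.ne_zero)
  have hc := aux_card p hp y hZ s hs hps hys
  have hsoc : ∀ q : Q, (p : R) • q = 0 → y • q = 0 → q ∈ Submodule.span R {s} := by
    intro q h1 h2
    rw [aux_mem p y hZ s hps hys]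
    obtain ⟨n, hn⟩ := aux_soc p hp y hZ s hs hmin q h1 h2
    exact ⟨n, hn.symm⟩
  have hex : ∀ z w : R, z • s = 0 →
      (∀ q : Q, z • q = 0 → w • q = 0 → q ∈ Submodule.span R {s}) →
      ∃ a : Q, z • a = 0 ∧ (w * w) • a = s := by
    intro z w hz hzw
    refine aux_wz p s hmin z w hzw hc ?_
    by_contra! hk
    obtain ⟨n, hn⟩ := aux_nilp s hs hmin z hz
    exact hno (aux_two p hp hcard z n hn hk)
  obtain ⟨a, ha, ha'⟩ := hex y p hys (fun q h1 h2 => hsoc q h2 h1)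
  obtain ⟨b, hb, hb'⟩ := hex p y hps hsoc
  obtain ⟨c, hcc, hc'⟩ := hex (p + y) p (by rw [add_smul, hps, hys, add_zero])
    (fun q h1 h2 => hsoc q h2 (by rwa [add_smul, h2, zero_add] at h1))
  obtain ⟨h1, h2⟩ := aux_Q3 p (p : R) y s hps hys hsoc hc hcard a b c ha ha' hb hb' hcc hc'
  refine ⟨fun q => ?_, {a, b, c}, Finset.card_le_three, by simpa using h2⟩
  have hSP : ∀ q ∈ Submodule.span R {s}, (p : R) • q = 0 := by
    intro q hq
    obtain ⟨r, rfl⟩ := Submodule.mem_span_singleton.1 hq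
    rw [smul_comm, hps, smul_zero]
  have hSy : ∀ q ∈ Submodule.span R {s}, y • q = 0 := by
    intro q hq
    obtain ⟨r, rfl⟩ := Submodule.mem_span_singleton.1 hq
    rw [smul_comm, hys, smul_zero]
  obtain ⟨e1, e2, e3⟩ := h1 q
  exact ⟨hSP _ e1, hSy _ e1, hSy _ e2, hSy _ e3⟩

/-- The map to the injective hull given by a character. -/
noncomputable def auxIota (φ : Q →+ AddCircle (1 : ℚ)) : Q →ₗ[R] CharacterModule R where
  toFun q := φ.comp (AddMonoidHom.mk' (fun r : R => r • q) (fun a b => add_smul a b q))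
  map_add' q q' := by
    refine CharacterModule.ext _ fun r => ?_
    change φ (r • (q + q')) = φ (r • q) + φ (r • q')
    rw [smul_add, map_add]
  map_smul' t q := by
    refine CharacterModule.ext _ fun r => ?_
    change φ (r • (t • q)) = φ ((t • r) • q)
    rw [smul_eq_mul, mul_comm, mul_smul]

theorem auxIota_apply (φ : Q →+ AddCircle (1 : ℚ)) (q : Q) (r : R) :
    auxIota φ q r = φ (r • q) := rfl

theorem aux_d0 (P y : R)
    (hZ : ∀ r : R, ∃ (n : ℤ) (u v : R), r = n + P * u + y * v) (d : CharacterModule R)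
    (h1 : P • d = 0) (h2 : y • d = 0) (h : d 1 = 0) : d = 0 := by
  refine CharacterModule.ext _ fun r => ?_
  obtain ⟨n, u, v, rfl⟩ := hZ r
  have e1 : d (P * u) = 0 := by
    have := DFunLike.congr_fun h1 u
    exact this
  have e2 : d (y * v) = 0 := by
    have := DFunLike.congr_fun h2 v
    exact this
  have e3 : d (n : R) = 0 := by
    have : (n : R) = n • (1 : R) := by simp
    rw [this, map_zsmul, h, smul_zero]
  change d _ = 0
  rw [map_add, map_add, e1, e2, e3]
  simp

theorem aux_d (p : ℕ) (y : R)
    (hZ : ∀ r : R, ∃ (n : ℤ) (u v : R), r = n + (p : R) * u + y * v) (d : CharacterModule R)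
    (h1 : (p : R) • ((p : R) * p) • d = 0) (h2 : y • ((p : R) * p) • d = 0)
    (h3 : y • ((p : R) * y) • d = 0) (h4 : y • (y * y) • d = 0)
    (e1 : d 1 = 0) (e2 : d y = 0) (e3 : d (y * y) = 0) : d = 0 := by
  have hpd : ∀ (d : CharacterModule R) (r : R), d ((p : R) * r) = p • d r := by
    intro d r
    rw [← nsmul_eq_mul, map_nsmul]
  have hd0 := aux_d0 (p : R) y hZ
  have h22 : (p : R) • ((p : R) * y) • d = 0 := by
    rw [← h2, ← mul_smul, ← mul_smul]; congr 1; ring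
  have h33 : (p : R) • (y * y) • d = 0 := by
    rw [← h3, ← mul_smul, ← mul_smul]; congr 1; ring
  have k1 : ((p : R) * p) • d = 0 := hd0 _ h1 h2 (by
    rw [CharacterModule.smul_apply, smul_eq_mul, mul_assoc, hpd, hpd, e1]; simp)
  have k2 : ((p : R) * y) • d = 0 := hd0 _ h22 h3 (by
    rw [CharacterModule.smul_apply, smul_eq_mul, mul_one, hpd, e2]; simp)
  have k3 : (y * y) • d = 0 := hd0 _ h33 h4 (by
    rw [CharacterModule.smul_apply, smul_eq_mul, mul_one, e3])
  have k4 : (p : R) • d = 0 := hd0 _ (by rw [← mul_smul, k1]) (by rw [← mul_smul, mul_comm, k2]) (by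
    rw [CharacterModule.smul_apply, smul_eq_mul, hpd, e1]; simp)
  have k5 : y • d = 0 := hd0 _ (by rw [← mul_smul, k2]) (by rw [← mul_smul, k3]) (by
    rw [CharacterModule.smul_apply, smul_eq_mul, mul_one, e2])
  exact hd0 _ k4 k5 e1

theorem aux_iota_inj (s : Q) (hmin : ∀ q : Q, q ≠ 0 → ∃ r : R, r • q = s)
    (φ : Q →+ AddCircle (1 : ℚ)) (hφ : φ s ≠ 0) :
    Function.Injective (auxIota (R := R) φ) := by
  rw [injective_iff_map_eq_zero]
  intro q hq
  by_contra h
  obtain ⟨r, hr⟩ := hmin q h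
  apply hφ
  rw [← hr, ← auxIota_apply, hq]; rfl

theorem aux_circ (n : ℕ) (hn : 0 < n) (t : AddCircle (1 : ℚ)) (h : n • t = 0) :
    ∃ k : ℕ, t = k • (((n : ℚ)⁻¹ : ℚ) : AddCircle (1 : ℚ)) := by
  obtain ⟨m, -, rfl⟩ := (AddCircle.nsmul_eq_zero_iff hn).1 h
  refine ⟨m, ?_⟩
  rw [← AddCircle.coe_nsmul]
  congr 1
  simp [div_eq_mul_inv]

theorem aux_psi (n : ℕ) (hn : 0 < n) : ∃ ψ : ZMod n →+ AddCircle (1 : ℚ),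
    Function.Injective ψ ∧ ∀ k : ℕ, ψ (k : ZMod n) = k • (((n : ℚ)⁻¹ : ℚ) : AddCircle (1 : ℚ)) := by
  have hn' : (n : ℚ) ≠ 0 := by exact_mod_cast hn.ne'
  let f : ℤ →+ AddCircle (1 : ℚ) := zmultiplesHom _ (((n : ℚ)⁻¹ : ℚ) : AddCircle (1 : ℚ))
  have hf : ∀ k : ℤ, f k = (((k : ℚ) * (n : ℚ)⁻¹ : ℚ) : AddCircle (1 : ℚ)) := by
    intro k
    rw [← zsmul_eq_mul]
    rfl
  have hker : ∀ k : ℤ, f k = 0 → (k : ZMod n) = 0 := by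
    intro k hk
    rw [hf, AddCircle.coe_eq_zero_iff] at hk
    obtain ⟨m, hm⟩ := hk
    rw [ZMod.intCast_zmod_eq_zero_iff_dvd]
    refine ⟨m, ?_⟩
    field_simp at hm
    have : (k : ℚ) = n * m := by rw [← hm]; simp; ring
    exact_mod_cast this
  have hfn : f n = 0 := by
    rw [hf, AddCircle.coe_eq_zero_iff]
    exact ⟨1, by simp [hn']⟩
  refine ⟨ZMod.lift n ⟨f, hfn⟩, (ZMod.lift_injective n).2 hker, fun k => ?_⟩
  have := ZMod.lift_coe n ⟨f, hfn⟩ k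
  rw [Int.cast_natCast] at this
  rw [this]
  change ((k : ℤ) • _ : AddCircle (1 : ℚ)) = _
  rw [natCast_zsmul]
end gen2

theorem aux_val (p k : ℕ) (n : ℕ) :
    (p : ZMod (p ^ (k + 1))) * ((((n : ZMod (p ^ k)).val : ℕ)) : ZMod (p ^ (k + 1))) =
      ((p * n : ℕ) : ZMod (p ^ (k + 1))) := by
  rw [ZMod.val_natCast, ← Nat.cast_mul, ZMod.natCast_eq_natCast_iff, pow_succ']
  exact Nat.ModEq.mul_left' p (Nat.mod_modEq n _)

theorem aux_dvd (p i j n : ℕ) (hp : p.Prime) (h : p ^ (i + j) ∣ p ^ i * n) : p ^ j ∣ n := by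
  rw [pow_add] at h
  exact (Nat.mul_dvd_mul_iff_left (pow_pos hp.pos i)).1 h

theorem aux_val2 (p n : ℕ) :
    ((p ^ 2 * ((n : ZMod p).val : ℕ) : ℕ) : ZMod (p ^ 3)) = ((p ^ 2 * n : ℕ) : ZMod (p ^ 3)) := by
  rw [ZMod.natCast_eq_natCast_iff, pow_succ p 2, ZMod.val_natCast]
  exact Nat.ModEq.mul_left' _ (Nat.mod_modEq _ _)

section fin
variable {R : Type*} [CommRing R]

theorem aux_P (p : ℕ) (hp : p.Prime) (y : R) [Module R (ZMod (p ^ 3) × ZMod (p ^ 2) × ZMod p)]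
    (hY : ∀ a : ZMod (p ^ 3) × ZMod (p ^ 2) × ZMod p,
      y • a =
        ((p : ZMod (p ^ 3)) * ((a.2.1.val : ℕ) : ZMod (p ^ 3)),
         (p : ZMod (p ^ 2)) * ((a.2.2.val : ℕ) : ZMod (p ^ 2)), 0)) :
    (∀ a : ZMod (p ^ 3) × ZMod (p ^ 2) × ZMod p,
      (y • a).1 = ((p * a.2.1.val : ℕ) : ZMod (p ^ 3)) ∧
      ((y * y) • a).1 = ((p ^ 2 * a.2.2.val : ℕ) : ZMod (p ^ 3)) ∧
      (p : R) • ((p : R) * p) • a = 0 ∧ y • ((p : R) * p) • a = 0 ∧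
      y • ((p : R) * y) • a = 0 ∧ y • (y * y) • a = 0) := by
  have : NeZero p := ⟨hp.ne_zero⟩
  intro a
  have hyy : (y * y) • a = (((p ^ 2 * a.2.2.val : ℕ) : ZMod (p ^ 3)), 0, 0) := by
    rw [mul_smul, hY (y • a), hY a]
    refine Prod.ext ?_ (Prod.ext ?_ rfl)
    · change (p : ZMod (p ^ 3)) * ((((p : ZMod (p ^ 2)) * ((a.2.2.val : ℕ) : ZMod (p ^ 2))).val : ℕ) : ZMod (p ^ 3)) = _
      rw [← Nat.cast_mul (α := ZMod (p ^ 2)), aux_val p 2]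
      congr 1; ring
    · change (p : ZMod (p ^ 2)) * (((0 : ZMod p).val : ℕ) : ZMod (p ^ 2)) = 0
      simp
  have hpz : ∀ (b : ZMod (p ^ 3) × ZMod (p ^ 2) × ZMod p),
      (p : R) • b = (p * b.1, p * b.2.1, p * b.2.2) := by
    intro b
    rw [Nat.cast_smul_eq_nsmul]
    exact Prod.ext (nsmul_eq_mul _ _) (Prod.ext (nsmul_eq_mul _ _) (nsmul_eq_mul _ _))
  have hp3 : ((p : ZMod (p ^ 3))) ^ 3 = 0 := by
    rw [← Nat.cast_pow]; exact ZMod.natCast_self _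
  have hp2 : ((p : ZMod (p ^ 2))) ^ 2 = 0 := by
    rw [← Nat.cast_pow]; exact ZMod.natCast_self _
  have hp1 : ((p : ZMod p)) = 0 := ZMod.natCast_self _
  refine ⟨?_, ?_, ?_, ?_, ?_, ?_⟩
  · rw [hY]; push_cast; rfl
  · rw [hyy]
  · rw [mul_smul, hpz, hpz, hpz]
    refine Prod.ext ?_ (Prod.ext ?_ ?_)
    · simp only [Prod.fst_zero, Prod.snd_zero]
      linear_combination a.1 * hp3
    · simp only [Prod.fst_zero, Prod.snd_zero]
      linear_combination p * a.2.1 * hp2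
    · simp only [Prod.fst_zero, Prod.snd_zero]
      rw [hp1]; simp
  · rw [smul_comm, mul_smul, hpz, hpz, hY]
    refine Prod.ext ?_ (Prod.ext ?_ ?_)
    · simp only [Prod.fst_zero, Prod.snd_zero]
      linear_combination ((a.2.1.val : ℕ) : ZMod (p ^ 3)) * hp3
    · simp only [Prod.fst_zero, Prod.snd_zero]
      linear_combination p * ((a.2.2.val : ℕ) : ZMod (p ^ 2)) * hp2
    · simp only [Prod.fst_zero, Prod.snd_zero]
      simp
  · have : y • ((p : R) * y) • a = (p : R) • (y * y) • a := by
      rw [← mul_smul, ← mul_smul]; congr 1; ring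
    rw [this, hyy, hpz]
    refine Prod.ext ?_ (Prod.ext ?_ ?_)
    · simp only [Prod.fst_zero, Prod.snd_zero]
      push_cast
      linear_combination ((a.2.2.val : ℕ) : ZMod (p ^ 3)) * hp3
    · simp only [Prod.fst_zero, Prod.snd_zero]
      simp
    · simp only [Prod.fst_zero, Prod.snd_zero]
      simp
  · rw [hyy, hY]
    simp

theorem aux_fin (p : ℕ) (hp : p.Prime) (y : R)
    (hZ : ∀ r : R, ∃ (n : ℤ) (u v : R), r = n + (p : R) * u + y * v)
    {Q : Type*} [AddCommGroup Q] [Module R Q] (s : Q) (hs : s ≠ 0)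
    (hmin : ∀ q : Q, q ≠ 0 → ∃ r : R, r • q = s) (hcard : Nat.card Q = p ^ 6)
    (hk : ∀ q : Q, (p : R) • ((p : R) * p) • q = 0 ∧ y • ((p : R) * p) • q = 0 ∧
      y • ((p : R) * y) • q = 0 ∧ y • (y * y) • q = 0)
    [Module R (ZMod (p ^ 3) × ZMod (p ^ 2) × ZMod p)]
    (hY : ∀ a : ZMod (p ^ 3) × ZMod (p ^ 2) × ZMod p,
      y • a =
        ((p : ZMod (p ^ 3)) * ((a.2.1.val : ℕ) : ZMod (p ^ 3)),
         (p : ZMod (p ^ 2)) * ((a.2.2.val : ℕ) : ZMod (p ^ 2)), 0)) :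
    Nonempty (Q ≃ₗ[R] (ZMod (p ^ 3) × ZMod (p ^ 2) × ZMod p)) := by
  have hne : NeZero p := ⟨hp.ne_zero⟩
  have hp0 : (p : ℚ) ≠ 0 := by exact_mod_cast hp.ne_zero
  have hP := aux_P p hp y hY
  obtain ⟨φ, hφ⟩ : ∃ φ : Q →+ AddCircle (1 : ℚ), φ s ≠ 0 :=
    CharacterModule.exists_character_apply_ne_zero_of_ne_zero hs
  have hi := aux_iota_inj (R := R) s hmin φ hφ
  obtain ⟨ψ, hψ, hψk⟩ := aux_psi (p ^ 3) (pow_pos hp.pos 3)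
  let ψ' : (ZMod (p ^ 3) × ZMod (p ^ 2) × ZMod p) →+ AddCircle (1 : ℚ) :=
    ψ.comp (AddMonoidHom.fst _ _)
  have hψ' : ∀ a, ψ' a = ψ a.1 := fun _ => rfl
  have hj : Function.Injective (auxIota (R := R) ψ') := by
    rw [injective_iff_map_eq_zero]
    intro a ha
    have h : ∀ r : R, (r • a).1 = 0 := by
      intro r
      have := DFunLike.congr_fun ha r
      rw [auxIota_apply, hψ'] at this
      exact hψ (this.trans (map_zero ψ).symm)
    obtain ⟨e1, e2, -⟩ := hP a
    have h0 := h 1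
    rw [one_smul] at h0
    rw [h, eq_comm, ZMod.natCast_eq_zero_iff] at e1 e2
    have e1 := aux_dvd p 1 2 _ hp (by simpa using e1)
    have e2 := aux_dvd p 2 1 _ hp e2
    rw [pow_one] at e2
    rw [← ZMod.natCast_eq_zero_iff, ZMod.natCast_zmod_val] at e1 e2
    exact Prod.ext h0 (Prod.ext e1 e2)
  have hfin : Finite Q := Nat.finite_of_card_ne_zero (by rw [hcard]; exact pow_ne_zero _ hp.ne_zero)
  have hle : LinearMap.range (auxIota (R := R) (φ : Q →+ AddCircle (1 : ℚ))) ≤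
      LinearMap.range (auxIota (R := R) ψ') := by
    rintro _ ⟨q, rfl⟩
    set e := auxIota (R := R) (φ : Q →+ AddCircle (1 : ℚ)) q with he
    have hpe : ∀ (d : CharacterModule R) (r : R), d ((p : R) * r) = p • d r := by
      intro d r
      rw [← nsmul_eq_mul, map_nsmul]
    obtain ⟨k1, k2, k3, k4⟩ := hk q
    have hker : ∀ r : R, r • q = 0 → r • e = 0 := by
      intro r hr
      rw [he, ← map_smul, hr, map_zero]
    have hker' : ∀ r : R, r • q = 0 → e r = 0 := by
      intro r hr
      rw [he, auxIota_apply, hr]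
      exact map_zero φ
    have t1 : p ^ 3 • e 1 = 0 := by
      rw [← map_nsmul]
      apply hker'
      rw [← k1, ← mul_smul]; congr 1; simp; ring
    have t2 : p ^ 2 • e y = 0 := by
      rw [← map_nsmul]
      apply hker'
      rw [← k2, ← mul_smul]; congr 1; simp; ring
    have t3 : p • e (y * y) = 0 := by
      rw [← map_nsmul]
      apply hker'
      rw [← k3, ← mul_smul]; congr 1; simp; ring
    obtain ⟨n1, hn1⟩ := aux_circ _ (pow_pos hp.pos 3) _ t1
    obtain ⟨n2, hn2⟩ := aux_circ _ (pow_pos hp.pos 2) _ t2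
    obtain ⟨n3, hn3⟩ := aux_circ _ hp.pos _ t3
    let a : ZMod (p ^ 3) × ZMod (p ^ 2) × ZMod p := (n1, n2, n3)
    refine ⟨a, ?_⟩
    obtain ⟨e1, e2, l1, l2, l3, l4⟩ := hP a
    have e1' : (y • a).1 = ((p * n2 : ℕ) : ZMod (p ^ 3)) := by
      rw [e1, Nat.cast_mul]; exact aux_val p 2 n2
    have e2' : ((y * y) • a).1 = ((p ^ 2 * n3 : ℕ) : ZMod (p ^ 3)) := by
      rw [e2]; exact aux_val2 p n3
    rw [← sub_eq_zero]
    have hkd : ∀ r r' : R, r • r' • q = 0 → r • r' • a = 0 →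
        r • r' • (auxIota (R := R) ψ' a - e) = 0 := by
      intro r r' h1 h2
      rw [smul_sub, smul_sub, he, ← map_smul, ← map_smul, ← map_smul, ← map_smul, h1, h2, map_zero,
        map_zero, sub_zero]
    have hsub : ∀ (d d' : CharacterModule R) (r : R), (d - d') r = d r - d' r := fun _ _ _ => rfl
    refine aux_d p y hZ _ (hkd _ _ k1 l1) (hkd _ _ k2 l2) (hkd _ _ k3 l3) (hkd _ _ k4 l4) ?_ ?_ ?_
    · rw [hsub, auxIota_apply, hψ', one_smul, hn1, sub_eq_zero]
      exact hψk n1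
    · rw [hsub, auxIota_apply, hψ', e1', hn2, sub_eq_zero, hψk, ← AddCircle.coe_nsmul,
        ← AddCircle.coe_nsmul]
      congr 1
      simp only [nsmul_eq_mul]
      push_cast
      field_simp
    · rw [hsub, auxIota_apply, hψ', e2', hn3, sub_eq_zero, hψk, ← AddCircle.coe_nsmul,
        ← AddCircle.coe_nsmul]
      congr 1
      simp only [nsmul_eq_mul]
      push_cast
      field_simp
  have hc1 : Nat.card (LinearMap.range (auxIota (R := R) (φ : Q →+ AddCircle (1 : ℚ)))) = p ^ 6 := by
    rw [← hcard]
    exact (Nat.card_congr (LinearEquiv.ofInjective _ hi).toEquiv).symm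
  have hc2 : Nat.card (LinearMap.range (auxIota (R := R) ψ')) = p ^ 6 := by
    rw [← Nat.card_congr (LinearEquiv.ofInjective _ hj).toEquiv]
    rw [Nat.card_prod, Nat.card_prod, Nat.card_zmod, Nat.card_zmod, Nat.card_zmod]
    ring
  have heq : LinearMap.range (auxIota (R := R) (φ : Q →+ AddCircle (1 : ℚ))) =
      LinearMap.range (auxIota (R := R) ψ') := by
    apply SetLike.coe_injective
    have hf2 : Finite (LinearMap.range (auxIota (R := R) ψ')) :=
      Nat.finite_of_card_ne_zero (by rw [hc2]; exact pow_ne_zero _ hp.ne_zero)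
    apply Set.eq_of_subset_of_ncard_le hle _ (Set.toFinite _)
    change Nat.card (LinearMap.range (auxIota (R := R) ψ')) ≤
      Nat.card (LinearMap.range (auxIota (R := R) (φ : Q →+ AddCircle (1 : ℚ))))
    rw [hc1, hc2]
  exact ⟨(LinearEquiv.ofInjective _ hi).trans ((LinearEquiv.ofEq _ _ heq).trans
    (LinearEquiv.ofInjective _ hj).symm)⟩
end fin

/-- Let `p` be an odd prime, `P'₁,₁ = R₂/(p, 1+x)`, and `P'₃,₁` the `R₂`-module with
underlying group `ℤ/p³ℤ × ℤ/p²ℤ × ℤ/pℤ` on which `x` acts by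
`x•(a₀,a₁,a₂) = (p•a₁ − a₀, p•a₂ − a₁, −a₂)`.  If `Q` is a cocyclic `R₂`-module (it has
a simple submodule `S` contained in every nonzero submodule) with socle isomorphic to
`P'₁,₁` and `|Q| = p⁶`, then `Q` is generated by at most three elements, and if `Q`
cannot be generated by two elements, then `Q ≅ P'₃,₁`. -/
theorem cocyclic_R₂_module_of_card_p6 (p : ℕ) (hp : p.Prime) (hodd : p ≠ 2)
    (Q : Type*) [AddCommGroup Q] [Module R₂ Q]
    (S : Submodule R₂ Q)
    (hS_simple : IsSimpleModule R₂ S)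
    (hS_min : ∀ T : Submodule R₂ Q, T ≠ ⊥ → S ≤ T)
    (hS_iso : Nonempty (S ≃ₗ[R₂] (R₂ ⧸ Ideal.span {(p : R₂), 1 + xR})))
    (hcard : Nat.card Q = p ^ 6)
    [Module R₂ (ZMod (p ^ 3) × ZMod (p ^ 2) × ZMod p)]
    [IsScalarTower ℤ R₂ (ZMod (p ^ 3) × ZMod (p ^ 2) × ZMod p)]
    (hX : ∀ a : ZMod (p ^ 3) × ZMod (p ^ 2) × ZMod p,
      xR • a =
        ((p : ZMod (p ^ 3)) * ((a.2.1.val : ℕ) : ZMod (p ^ 3)) - a.1,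
         (p : ZMod (p ^ 2)) * ((a.2.2.val : ℕ) : ZMod (p ^ 2)) - a.2.1,
         -a.2.2)) :
    (∃ G : Finset Q, G.card ≤ 3 ∧ Submodule.span R₂ (G : Set Q) = ⊤) ∧
    ((¬ ∃ G : Finset Q, G.card ≤ 2 ∧ Submodule.span R₂ (G : Set Q) = ⊤) →
      Nonempty (Q ≃ₗ[R₂] (ZMod (p ^ 3) × ZMod (p ^ 2) × ZMod p))) := by
  classical
  have hZ := aux_Z p hp hodd
  obtain ⟨e⟩ := hS_iso
  have hnt : Nontrivial S := IsSimpleModule.nontrivial R₂ S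
  obtain ⟨s', hs'⟩ := exists_ne (0 : S)
  have hs : (s' : Q) ≠ 0 := fun h => hs' (Subtype.ext h)
  have hkill : ∀ r ∈ Ideal.span {(p : R₂), 1 + xR}, r • (s' : Q) = 0 := by
    intro r hr
    have : r • s' = 0 := by
      apply e.injective
      rw [map_smul, map_zero]
      obtain ⟨t, ht⟩ := Ideal.Quotient.mk_surjective (e s')
      rw [← ht]
      change Ideal.Quotient.mk _ (r * t) = 0
      rw [Ideal.Quotient.eq_zero_iff_mem]
      exact Ideal.mul_mem_right _ _ hr
    exact congrArg Subtype.val this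
  have hps : (p : R₂) • (s' : Q) = 0 := hkill _ (Ideal.subset_span (by simp))
  have hys : (1 + xR) • (s' : Q) = 0 := hkill _ (Ideal.subset_span (by simp))
  have hmin : ∀ q : Q, q ≠ 0 → ∃ r : R₂, r • q = s' := by
    intro q hq
    have h := hS_min (Submodule.span R₂ {q}) (by simpa using hq)
    exact Submodule.mem_span_singleton.1 (h s'.2)
  have hY : ∀ a : ZMod (p ^ 3) × ZMod (p ^ 2) × ZMod p,
      (1 + xR) • a =
        ((p : ZMod (p ^ 3)) * ((a.2.1.val : ℕ) : ZMod (p ^ 3)),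
         (p : ZMod (p ^ 2)) * ((a.2.2.val : ℕ) : ZMod (p ^ 2)), 0) := by
    intro a
    rw [add_smul, one_smul, hX]
    refine Prod.ext ?_ (Prod.ext ?_ ?_)
    · exact add_sub_cancel _ _
    · exact add_sub_cancel _ _
    · exact add_neg_cancel _
  constructor
  · by_cases hno : ∃ G : Finset Q, G.card ≤ 2 ∧ Submodule.span R₂ (G : Set Q) = ⊤
    · obtain ⟨G, h1, h2⟩ := hno
      exact ⟨G, h1.trans (by norm_num), h2⟩
    · exact (aux_main p hp (1 + xR) hZ (s' : Q) hs hps hys hmin hcard hno).2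
  · intro hno
    have hk := (aux_main p hp (1 + xR) hZ (s' : Q) hs hps hys hmin hcard hno).1
    exact aux_fin p hp (1 + xR) hZ (s' : Q) hs hmin hcard hk hY
end
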